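/- arXiv:0802.4186 — 2 statements merged into one kernel-verified Lean document; each statement's English description precedes it below -/
import Mathlib

section
/- Let K ⊆ L be a commutative field extension such that for all nonzero finite-dimensional K-subspaces A, B of L one has dim_K⟨AB⟩ ≥ dim_K A + dim_K B − dim_K H, where H = {x ∈ L : x·⟨AB⟩ ⊆ ⟨AB⟩} is the stabilizer of ⟨AB⟩. Then for all positive integers r, s with r, s ≤ dim_K L, the minimum of dim_K⟨AB⟩ over all K-subspaces A, B of L with dim_K A = r and dim_K B = s equals the minimum of (⌈r/h⌉ + ⌈s/h⌉ − 1)·h over all h = [H:K] where H ranges over the finite-dimensional intermediate fields K ⊆ H ⊆ L. -/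
/-- The stabilizer `{x ∈ L : x·V ⊆ V}` of a `K`-subspace `V` of `L`, as a `K`-subspace. -/
def mulStabilizer (K L : Type*) [Field K] [Field L] [Algebra K L]
    (V : Submodule K L) : Submodule K L where
  carrier := {x : L | ∀ v ∈ V, x * v ∈ V}
  add_mem' := by
    intro x y hx hy v hv
    rw [add_mul]
    exact V.add_mem (hx v hv) (hy v hv)
  zero_mem' := by
    intro v hv
    rw [zero_mul]
    exact V.zero_mem
  smul_mem' := by
    intro c x hx v hv
    rw [Algebra.smul_def, mul_assoc, ← Algebra.smul_def]
    exact V.smul_mem c (hx v hv)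

/-!
Lower bound: the stabilizer of `⟨AB⟩` is a finite intermediate field `H`, and replacing `A`, `B`
by `⟨HA⟩`, `⟨HB⟩` changes neither `⟨AB⟩` nor `H`. These are `H`-spaces, so their dimensions are
multiples of `h = [H:K]`, at least `⌈r/h⌉ h` and `⌈s/h⌉ h`, and the hypothesis applied to them is
the bound.

Upper bound: over `H`, it is enough to find spaces `A`, `B` of dimensions `m`, `n` with
`dim ⟨AB⟩ ≤ m + n - 1`. If `x` is transcendental, the polynomials in `x` of degree `< m` and `< n`
do this. In general the powers of `x` are replaced by a sequence whose products still obey the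
degree rule: if `e 0, …, e (d - 1)` is such a basis of a field `M`, then `e i * x ^ q`, ordered by
`i + d * q`, is one of `M(x)`, because carries in `i + j` are absorbed by `e i * e j ∈ M`.
-/

open Module IntermediateField

section DegreeRule

variable {K M A : Type*} [CommSemiring K] [CommSemiring M] [CommSemiring A] [Algebra K M]
  [Algebra K A]

/-- A sequence in a `K`-algebra that multiplies like elements of degrees `0, 1, 2, …`: the spans of
its initial segments form a multiplicative filtration. No linear independence is required, so
finite-dimensional algebras are allowed; there only finitely many terms matter. -/
def IsMulFiltered (K : Type*) {A : Type*} [CommSemiring K] [CommSemiring A] [Algebra K A]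
    (e : ℕ → A) : Prop :=
  ∀ i j, e i * e j ∈ Submodule.span K (e '' Set.Iic (i + j))

lemma isMulFiltered_pow (x : A) : IsMulFiltered K (x ^ · : ℕ → A) := fun i j ↦
  Submodule.subset_span ⟨i + j, Set.mem_Iic.2 le_rfl, pow_add x i j⟩

lemma IsMulFiltered.map {e : ℕ → M} (he : IsMulFiltered K e) (f : M →ₐ[K] A) :
    IsMulFiltered K (f ∘ e) := fun i j ↦ by
  have h := Submodule.mem_map_of_mem (f := f.toLinearMap) (he i j)
  rwa [Submodule.map_span, ← Set.image_comp, AlgHom.toLinearMap_apply, map_mul] at h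

lemma IsMulFiltered.span_mul_span_le {e : ℕ → A} (he : IsMulFiltered K e) (r s : ℕ) :
    Submodule.span K (e '' Set.Iio r) * Submodule.span K (e '' Set.Iio s) ≤
      Submodule.span K (e '' Set.Iio (r + s - 1)) := by
  rw [Submodule.span_mul_span, Submodule.span_le, Set.mul_subset_iff]
  rintro _ ⟨i, hi, rfl⟩ _ ⟨j, hj, rfl⟩
  have hij : Set.Iic (i + j) ⊆ Set.Iio (r + s - 1) :=
    Set.Iic_subset_Iio.2 (by simp only [Set.mem_Iio] at hi hj; omega)
  exact Submodule.span_mono (Set.image_mono hij) (he i j)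

variable [Algebra M A]

/-- The products `e i • x ^ q` with `i < d`, placed at position `i + d * q`. -/
def powTower (e : ℕ → M) (d : ℕ) (x : A) (k : ℕ) : A :=
  e (k % d) • x ^ (k / d)

variable [IsScalarTower K M A]

lemma smul_pow_mem_span_powTower {e : ℕ → M} {d q k : ℕ} {x : A} {I : Set ℕ}
    (hId : ∀ i ∈ I, i < d) (hIk : ∀ i ∈ I, i + d * q ≤ k) {c : M}
    (hc : c ∈ Submodule.span K (e '' I)) :
    c • x ^ q ∈ Submodule.span K (powTower e d x '' Set.Iic k) := by
  suffices h : Submodule.span K (e '' I) ≤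
      (Submodule.span K (powTower e d x '' Set.Iic k)).comap
        ((LinearMap.toSpanSingleton M A (x ^ q)).restrictScalars K) from h hc
  rw [Submodule.span_le]
  rintro _ ⟨i, hi, rfl⟩
  refine Submodule.subset_span ⟨i + d * q, hIk i hi, ?_⟩
  have hid := hId i hi
  simp [powTower, Nat.add_mul_mod_self_left, Nat.mod_eq_of_lt hid,
    Nat.add_mul_div_left i q (Nat.zero_lt_of_lt hid), Nat.div_eq_of_lt hid]

lemma IsMulFiltered.powTower_of_span_eq_top {e : ℕ → M} (he : IsMulFiltered K e) {d : ℕ}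
    (hd : Submodule.span K (e '' Set.Iio d) = ⊤) (x : A) :
    IsMulFiltered K (powTower e d x) := fun i j ↦ by
  have hmul : powTower e d x i * powTower e d x j =
      (e (i % d) * e (j % d)) • x ^ (i / d + j / d) := by
    simp only [powTower, smul_mul_smul_comm, pow_add]
  have hi := Nat.mod_add_div i d
  have hj := Nat.mod_add_div j d
  rw [hmul]
  by_cases hcarry : i % d + j % d < d
  · refine smul_pow_mem_span_powTower (fun k hk ↦ ?_) (fun k hk ↦ ?_) (he (i % d) (j % d))
    · exact (Set.mem_Iic.1 hk).trans_lt hcarry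
    · rw [Set.mem_Iic] at hk
      rw [mul_add]
      omega
  · refine smul_pow_mem_span_powTower (I := Set.Iio d) (fun k hk ↦ hk) (fun k hk ↦ ?_)
      (hd ▸ Submodule.mem_top)
    rw [Set.mem_Iio] at hk
    rw [mul_add]
    omega

end DegreeRule

lemma linearIndependent_powTower {K M A : Type*} [CommRing K] [CommRing M] [CommRing A]
    [Algebra K M] [Algebra K A] [Algebra M A] [IsScalarTower K M A] {e : ℕ → M} {d n : ℕ} {x : A}
    (he : LinearIndependent K fun i : Fin d ↦ e i)
    (hx : LinearIndependent M fun j : Fin n ↦ x ^ (j : ℕ)) :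
    LinearIndependent K fun k : Fin (n * d) ↦ powTower e d x k := by
  have hprod := linearIndependent_smul he hx
  exact hprod.comp (fun k : Fin (n * d) ↦ (k.modNat, k.divNat))
    (Prod.swap_injective.comp finProdFinEquiv.symm.injective)

lemma linearIndependent_pow_of_transcendental {K A : Type*} [CommRing K] [CommRing A]
    [Algebra K A] {x : A} (hx : Transcendental K x) : LinearIndependent K (x ^ · : ℕ → A) := by
  have h := (Polynomial.basisMonomials K).linearIndependent.map_injOn
    (Polynomial.aeval x).toLinearMap (transcendental_iff_injective.1 hx).injOn
  simpa [Function.comp_def] using h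

lemma exists_isMulFiltered_of_powerBasis {K M E : Type*} [Field K] [Field M] [Field E]
    [Algebra K M] [Algebra K E] [Algebra M E] [IsScalarTower K M E]
    [FiniteDimensional K M] (pb : PowerBasis M E) {e : ℕ → M} (he : IsMulFiltered K e)
    (hli : LinearIndependent K fun i : Fin (finrank K M) ↦ e i) :
    ∃ g : ℕ → E, IsMulFiltered K g ∧ LinearIndependent K fun i : Fin (finrank K E) ↦ g i := by
  have hspan : Submodule.span K (e '' Set.Iio (finrank K M)) = ⊤ := by
    rw [← hli.span_eq_top_of_card_eq_finrank' (Fintype.card_fin _), ← Fin.range_val,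
      ← Set.range_comp]
    rfl
  have hdim : finrank K E = pb.dim * finrank K M := by
    rw [← pb.finrank, mul_comm, finrank_mul_finrank]
  rw [hdim]
  exact ⟨powTower e (finrank K M) pb.gen, he.powTower_of_span_eq_top hspan pb.gen,
    linearIndependent_powTower hli (by simpa using pb.basis.linearIndependent)⟩

instance finite_submodule_mul {R A : Type*} [CommSemiring R] [Semiring A] [Algebra R A]
    (M N : Submodule R A) [hM : Module.Finite R M] [hN : Module.Finite R N] :
    Module.Finite R ↥(M * N) :=
  Module.Finite.iff_fg.2 ((Module.Finite.iff_fg.1 hM).mul (Module.Finite.iff_fg.1 hN))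

lemma exists_le_finrank_eq {R V : Type*} [Ring R] [StrongRankCondition R] [AddCommGroup V]
    [Module R V] (W : Submodule R V) {n : ℕ} (hn : n ≤ finrank R W) : ∃ U ≤ W, finrank R U = n := by
  have := nontrivial_of_invariantBasisNumber R
  obtain ⟨f, hf⟩ := exists_linearIndependent_of_le_finrank hn
  refine ⟨Submodule.span R (Set.range fun i ↦ (f i : V)), ?_, ?_⟩
  · exact Submodule.span_le.2 (Set.range_subset_iff.2 fun i ↦ (f i).2)
  · exact (finrank_span_eq_card (hf.map' W.subtype W.ker_subtype)).trans (Fintype.card_fin n)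

section Fields

variable {K L : Type*} [Field K] [Field L] [Algebra K L]

lemma exists_isMulFiltered_of_intermediateField [FiniteDimensional K L]
    (M : IntermediateField K L) :
    ∃ e : ℕ → M, IsMulFiltered K e ∧ LinearIndependent K fun i : Fin (finrank K M) ↦ e i := by
  induction M using induction_on_adjoin with
  | base =>
    refine ⟨(1 ^ ·), isMulFiltered_pow 1, ?_⟩
    rw [IntermediateField.finrank_bot]
    exact .of_subsingleton 0 (by simp)
  | ih M x hM =>
    obtain ⟨e, he, hli⟩ := hM
    obtain ⟨g, hg, hgli⟩ :=
      exists_isMulFiltered_of_powerBasis (adjoin.powerBasis (.of_finite M x)) he hli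
    exact ⟨g, hg, hgli⟩

lemma exists_isMulFiltered_of_finiteDimensional (K L : Type*) [Field K] [Field L] [Algebra K L]
    [FiniteDimensional K L] :
    ∃ e : ℕ → L, IsMulFiltered K e ∧ LinearIndependent K fun i : Fin (finrank K L) ↦ e i := by
  obtain ⟨e, he, hli⟩ :=
    exists_isMulFiltered_of_intermediateField (⊤ : IntermediateField K L)
  rw [IntermediateField.finrank_top'] at hli
  exact ⟨_, he.map (topEquiv : _ ≃ₐ[K] L).toAlgHom,
    hli.map' (topEquiv : _ ≃ₐ[K] L).toLinearMap (LinearEquiv.ker topEquiv.toLinearEquiv)⟩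

lemma exists_isMulFiltered_of_le_rank {n : ℕ} (hn : (n : Cardinal) ≤ Module.rank K L) :
    ∃ e : ℕ → L, IsMulFiltered K e ∧ LinearIndependent K fun i : Fin n ↦ e i := by
  by_cases halg : Algebra.IsAlgebraic K L
  · obtain ⟨b, hb⟩ := exists_linearIndependent_of_le_rank hn
    let M := adjoin K (Set.range b)
    have : FiniteDimensional K M :=
      finiteDimensional_adjoin fun y _ ↦ (Algebra.IsAlgebraic.isAlgebraic y).isIntegral
    obtain ⟨e, he, hli⟩ := exists_isMulFiltered_of_finiteDimensional K M
    have hbM : LinearIndependent K fun i ↦ (⟨b i, subset_adjoin K _ ⟨i, rfl⟩⟩ : M) :=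
      .of_comp M.val.toLinearMap hb
    have hnM : n ≤ finrank K M := by simpa using hbM.fintype_card_le_finrank
    have hinj : Function.Injective M.val.toLinearMap := Subtype.val_injective
    exact ⟨_, he.map M.val,
      (hli.comp _ (Fin.castLE_injective hnM)).map' _ (LinearMap.ker_eq_bot.2 hinj)⟩
  · obtain ⟨x, hx⟩ := Algebra.transcendental_iff_not_isAlgebraic.2 halg
    exact ⟨(x ^ ·), isMulFiltered_pow x,
      (linearIndependent_pow_of_transcendental hx).comp _ Fin.val_injective⟩

lemma exists_finrank_mul_le {r s : ℕ} (hr : (r : Cardinal) ≤ Module.rank K L)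
    (hs : (s : Cardinal) ≤ Module.rank K L) :
    ∃ A B : Submodule K L, FiniteDimensional K A ∧ FiniteDimensional K B ∧
      finrank K A = r ∧ finrank K B = s ∧ finrank K ↥(A * B) ≤ r + s - 1 := by
  obtain ⟨e, he, hli⟩ := exists_isMulFiltered_of_le_rank (n := max r s)
    (by rcases max_choice r s with h | h <;> rwa [h])
  let F (t : ℕ) := Submodule.span K (e '' Set.Iio t)
  have hF (t : ℕ) : F t = Submodule.span K (Set.range fun i : Fin t ↦ e i) := by
    rw [← Function.comp_def e, Set.range_comp, Fin.range_val]
  have hdim (t : ℕ) (ht : t ≤ max r s) : finrank K (F t) = t := by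
    rw [hF]
    exact (finrank_span_eq_card (hli.comp _ (Fin.castLE_injective ht))).trans (Fintype.card_fin t)
  have hdim_le (t : ℕ) : finrank K (F t) ≤ t := by
    rw [hF]
    exact (finrank_range_le_card _).trans_eq (Fintype.card_fin t)
  have hfin (t : ℕ) : FiniteDimensional K (F t) :=
    FiniteDimensional.span_of_finite K ((Set.finite_Iio t).image e)
  exact ⟨F r, F s, hfin r, hfin s, hdim r (le_max_left r s), hdim s (le_max_right r s),
    (Submodule.finrank_mono (he.span_mul_span_le r s)).trans (hdim_le _)⟩

lemma ceilDiv_finrank_le_rank {F V : Type*} [Field F] [Algebra K F] [FiniteDimensional K F]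
    [AddCommGroup V] [Module K V] [Module F V] [IsScalarTower K F V] {t : ℕ}
    (ht : (t : Cardinal) ≤ Module.rank K V) :
    ((t ⌈/⌉ finrank K F : ℕ) : Cardinal) ≤ Module.rank F V := by
  rcases lt_or_ge (Module.rank F V) Cardinal.aleph0 with hfin | hinf
  · have : Module.Finite F V := rank_lt_aleph0_iff.1 hfin
    have : Module.Finite K V := .trans F V
    rw [← finrank_eq_rank, Nat.cast_le] at ht ⊢
    rwa [ceilDiv_le_iff_le_mul finrank_pos, finrank_mul_finrank]
  · exact Cardinal.natCast_lt_aleph0.le.trans hinf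

lemma exists_finrank_mul_le_ceilDiv (F : Type*) [Field F] [Algebra K F] [Algebra F L]
    [IsScalarTower K F L] [FiniteDimensional K F] {r s : ℕ}
    (hr : (r : Cardinal) ≤ Module.rank K L) (hs : (s : Cardinal) ≤ Module.rank K L) :
    ∃ A B : Submodule K L, finrank K A = r ∧ finrank K B = s ∧
      finrank K ↥(A * B) ≤ (r ⌈/⌉ finrank K F + s ⌈/⌉ finrank K F - 1) * finrank K F := by
  obtain ⟨A, B, hAfin, hBfin, hA, hB, hAB⟩ := exists_finrank_mul_le (K := F)
    (ceilDiv_finrank_le_rank hr) (ceilDiv_finrank_le_rank hs)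
  have hres (V : Submodule F L) : finrank K (V.restrictScalars K) = finrank K F * finrank F V :=
    (finrank_mul_finrank K F V).symm
  have hceil (t : ℕ) : t ≤ finrank K F * (t ⌈/⌉ finrank K F) :=
    (ceilDiv_le_iff_le_mul finrank_pos).1 le_rfl
  obtain ⟨A', hA'A, hA'⟩ := exists_le_finrank_eq (A.restrictScalars K)
    ((hceil r).trans_eq (by rw [hres, hA]))
  obtain ⟨B', hB'B, hB'⟩ := exists_le_finrank_eq (B.restrictScalars K)
    ((hceil s).trans_eq (by rw [hres, hB]))
  have hle : A' * B' ≤ (A * B).restrictScalars K :=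
    Submodule.mul_le.2 fun x hx y hy ↦ Submodule.mul_mem_mul (M := A) (N := B) (hA'A hx) (hB'B hy)
  have hfin : FiniteDimensional K ((A * B).restrictScalars K) :=
    FiniteDimensional.trans K F ↥(A * B)
  refine ⟨A', B', hA', hB', ?_⟩
  calc finrank K ↥(A' * B')
      ≤ finrank K ((A * B).restrictScalars K) := Submodule.finrank_mono hle
    _ = finrank F ↥(A * B) * finrank K F := by rw [hres, mul_comm]
    _ ≤ (r ⌈/⌉ finrank K F + s ⌈/⌉ finrank K F - 1) * finrank K F := by gcongr

/-- The stabilizer of a subspace, as a subalgebra. -/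
def mulStabilizerSubalgebra (V : Submodule K L) : Subalgebra K L :=
  (mulStabilizer K L V).toSubalgebra (fun v hv ↦ by rwa [one_mul])
    fun x y hx hy v hv ↦ by
      rw [mul_assoc]
      exact hx _ (hy v hv)

lemma finiteDimensional_mulStabilizer {V : Submodule K L} [FiniteDimensional K V] (hV : V ≠ ⊥) :
    FiniteDimensional K (mulStabilizer K L V) := by
  obtain ⟨v, hv, hv0⟩ := V.exists_mem_ne_zero_of_ne_bot hV
  refine Submodule.finiteDimensional_of_le (S₂ := V.map (LinearMap.mulRight K v⁻¹)) fun x hx ↦ ?_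
  exact ⟨x * v, hx v hv, mul_inv_cancel_right₀ hv0 x⟩

lemma exists_intermediateField_toSubmodule_eq_mulStabilizer {V : Submodule K L}
    [FiniteDimensional K V] (hV : V ≠ ⊥) :
    ∃ H : IntermediateField K L, FiniteDimensional K H ∧
      Subalgebra.toSubmodule H.toSubalgebra = mulStabilizer K L V := by
  have hfin : FiniteDimensional K (mulStabilizerSubalgebra V) := finiteDimensional_mulStabilizer hV
  have halg : (mulStabilizerSubalgebra V).IsAlgebraic :=
    Subalgebra.isAlgebraic_iff _ |>.2 inferInstance
  exact ⟨halg.toIntermediateField, hfin, rfl⟩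

lemma le_mulStabilizer_iff {T V : Submodule K L} : T ≤ mulStabilizer K L V ↔ T * V ≤ V :=
  Submodule.mul_le.symm

lemma finrank_dvd_finrank_of_le_mulStabilizer (H : IntermediateField K L) {V : Submodule K L}
    (hV : Subalgebra.toSubmodule H.toSubalgebra ≤ mulStabilizer K L V) :
    finrank K H ∣ finrank K V := by
  let W : Submodule H L := { V with smul_mem' := fun c v hv ↦ hV c.2 v hv }
  exact ⟨finrank H W, (finrank_mul_finrank K H W).symm⟩

lemma ceilDiv_add_ceilDiv_sub_one_mul_le {h r s m n k : ℕ} (hh : 0 < h) (hm : h ∣ m) (hn : h ∣ n)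
    (hr : r ≤ m) (hs : s ≤ n) (hk : m + n ≤ k + h) : (r ⌈/⌉ h + s ⌈/⌉ h - 1) * h ≤ k := by
  obtain ⟨a, rfl⟩ := hm
  obtain ⟨b, rfl⟩ := hn
  have hra : r ⌈/⌉ h ≤ a := (ceilDiv_le_iff_le_mul hh).2 hr
  have hsb : s ⌈/⌉ h ≤ b := (ceilDiv_le_iff_le_mul hh).2 hs
  calc (r ⌈/⌉ h + s ⌈/⌉ h - 1) * h ≤ (a + b - 1) * h := by gcongr
    _ = h * a + h * b - h := by rw [Nat.sub_mul, one_mul, add_mul, mul_comm a, mul_comm b]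
    _ ≤ k := by omega

lemma exists_ceilDiv_le_finrank_mul
    (hlx : ∀ A B : Submodule K L, A ≠ ⊥ → B ≠ ⊥ →
      FiniteDimensional K A → FiniteDimensional K B →
      (finrank K ↥(A * B) : ℤ) ≥
        (finrank K A : ℤ) + (finrank K B : ℤ) - (finrank K (mulStabilizer K L (A * B)) : ℤ))
    {A B : Submodule K L} [FiniteDimensional K A] [FiniteDimensional K B]
    (hA : A ≠ ⊥) (hB : B ≠ ⊥) :
    ∃ H : IntermediateField K L, FiniteDimensional K H ∧
      (finrank K A ⌈/⌉ finrank K H + finrank K B ⌈/⌉ finrank K H - 1) * finrank K H ≤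
        finrank K ↥(A * B) := by
  have hAB : A * B ≠ ⊥ := mul_ne_zero hA hB
  obtain ⟨H, hfin, hH⟩ := exists_intermediateField_toSubmodule_eq_mulStabilizer hAB
  let T := Subalgebra.toSubmodule H.toSubalgebra
  have hTfin : FiniteDimensional K T := hfin
  have hTT : T * T = T := H.toSubalgebra.isIdempotentElem_toSubmodule
  have hle (V : Submodule K L) : V ≤ T * V :=
    le_mul_of_one_le_left' (Submodule.one_le.2 H.one_mem)
  have hTAB : T * (A * B) = A * B := (le_mulStabilizer_iff.1 hH.le).antisymm (hle _)
  have hsat : T * A * (T * B) = A * B := by rw [mul_mul_mul_comm, hTT, hTAB]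
  have hdvd (V : Submodule K L) : finrank K H ∣ finrank K ↥(T * V) :=
    finrank_dvd_finrank_of_le_mulStabilizer H
      (le_mulStabilizer_iff.2 (by rw [← mul_assoc, hTT]))
  have hdim := hlx (T * A) (T * B) (ne_bot_of_le_ne_bot hA (hle A))
    (ne_bot_of_le_ne_bot hB (hle B)) inferInstance inferInstance
  rw [hsat, ← hH] at hdim
  have hdim' : finrank K ↥(T * A) + finrank K ↥(T * B) ≤ finrank K ↥(A * B) + finrank K H := by
    change (_ : ℤ) ≥ _ + _ - (finrank K H : ℤ) at hdim
    omega
  exact ⟨H, hfin, ceilDiv_add_ceilDiv_sub_one_mul_le finrank_pos (hdvd A) (hdvd B)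
    (Submodule.finrank_mono (hle A)) (Submodule.finrank_mono (hle B)) hdim'⟩

end Fields

/-- Section 8: if the extension `K ⊆ L` satisfies the conclusion of the Hou–Leung–Xiang
theorem (Conjecture 8.1 of Hou), then `μ_{K,L}(r,s) = κ_{K,L}(r,s)` for all positive
`r, s ≤ dim_K L`. -/
theorem stmt_14 (K L : Type*) [Field K] [Field L] [Algebra K L]
    (hlx : ∀ A B : Submodule K L, A ≠ ⊥ → B ≠ ⊥ →
      FiniteDimensional K A → FiniteDimensional K B →
      (Module.finrank K ↥(A * B) : ℤ) ≥
        (Module.finrank K A : ℤ) + (Module.finrank K B : ℤ)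
          - (Module.finrank K ↥(mulStabilizer K L (A * B)) : ℤ))
    (r s : ℕ) (hr : 0 < r) (hs : 0 < s)
    (hrL : (r : Cardinal) ≤ Module.rank K L) (hsL : (s : Cardinal) ≤ Module.rank K L) :
    sInf {n : ℕ | ∃ A B : Submodule K L,
        Module.finrank K A = r ∧ Module.finrank K B = s ∧ Module.finrank K ↥(A * B) = n}
      = sInf {n : ℕ | ∃ H : IntermediateField K L, FiniteDimensional K H ∧
          n = (r ⌈/⌉ Module.finrank K ↥H + s ⌈/⌉ Module.finrank K ↥H - 1)
                * Module.finrank K ↥H} := by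
  apply csInf_eq_csInf_of_forall_exists_le
  · rintro _ ⟨A, B, rfl, rfl, rfl⟩
    have := FiniteDimensional.of_finrank_pos hr
    have := FiniteDimensional.of_finrank_pos hs
    obtain ⟨H, hH, hle⟩ := exists_ceilDiv_le_finrank_mul hlx
      (Submodule.one_le_finrank_iff.1 hr) (Submodule.one_le_finrank_iff.1 hs)
    exact ⟨_, ⟨H, hH, rfl⟩, hle⟩
  · rintro _ ⟨H, hH, rfl⟩
    obtain ⟨A, B, hA, hB, hle⟩ := exists_finrank_mul_le_ceilDiv H hrL hsL
    exact ⟨_, ⟨A, B, hA, hB, rfl⟩, hle⟩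
end

section
/- Let K ⊆ L be a commutative field extension with K of characteristic 0, and let r, s be positive integers with r, s ≤ dim_K L. Then the minimum of dim_K⟨AB⟩, taken over all K-subspaces A, B of L with dim_K A = r and dim_K B = s, equals the minimum of (⌈r/h⌉ + ⌈s/h⌉ − 1)·h, taken over all h = [H:K] where H ranges over the finite-dimensional intermediate fields K ⊆ H ⊆ L. -/
/-!
The lower bound is a linear analogue of Kneser's addition theorem. Dyson transforms attach to each
nonzero `b ∈ B` a finite-dimensional intermediate field `H` with `b H A ⊆ A B` and
`dim A + dim B ≤ dim (A B) + dim H`. By separability only finitely many `H` can occur, and a vector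
space over an infinite field is not a finite union of proper subspaces, so one `H` serves every
`b`; in particular `H` stabilizes `A B`. Let `S` be the full stabilizer of `A B`. Applied to `S A`
and `S B`, whose product is `A B`, this gives `dim (S A) + dim (S B) ≤ dim (A B) + dim S`, and
`dim (S A)`, `dim (S B)` are multiples of `dim S`.

For the upper bound take, over `H`, the spans of `1, x, …, x ^ (⌈r/h⌉ - 1)` and
`1, x, …, x ^ (⌈s/h⌉ - 1)` and cut them down to `K`-subspaces of dimensions `r` and `s`.
-/

namespace LinearKneser

open Module Submodule
open scoped Pointwise

section Subspaces

variable {K L : Type*} [Field K] [Field L] [Algebra K L]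

instance finiteDimensional_mul (A B : Submodule K L) [FiniteDimensional K A]
    [FiniteDimensional K B] : FiniteDimensional K ↥(A * B) :=
  Module.Finite.iff_fg.2 ((Module.Finite.iff_fg.1 ‹_›).mul (Module.Finite.iff_fg.1 ‹_›))

instance finiteDimensional_smul (e : L) (A : Submodule K L) [FiniteDimensional K A] :
    FiniteDimensional K ↥(e • A) :=
  Module.Finite.map A _

theorem finrank_smul {e : L} (he : e ≠ 0) (A : Submodule K L) :
    finrank K ↥(e • A) = finrank K A :=
  (A.equivMapOfInjective (LinearMap.mulLeft K e) (mul_right_injective₀ he)).finrank_eq.symm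

theorem finiteDimensional_of_smul_le {H : IntermediateField K L} {W : Submodule K L}
    [FiniteDimensional K W] {w : L} (hw : w ≠ 0) (h : w • H.toSubalgebra.toSubmodule ≤ W) :
    FiniteDimensional K H :=
  finiteDimensional_of_le (S₂ := w⁻¹ • W) <| by
    simpa only [inv_smul_smul₀ hw] using smul_le_smul_left w⁻¹ h

theorem smul_eq_self_of_smul_le {x : L} (hx : x ≠ 0) {A : Submodule K L} [FiniteDimensional K A]
    (h : x • A ≤ A) : x • A = A :=
  eq_of_le_of_finrank_eq h (finrank_smul hx A)

/-- The stabilizer `{x | x A ⊆ A}` of a finite-dimensional subspace `A` of a field extension;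
finite-dimensionality makes it closed under inversion. -/
def stabilizer (A : Submodule K L) [FiniteDimensional K A] : IntermediateField K L where
  carrier := {x | x • A ≤ A}
  mul_mem' {x y} hx hy := by
    rw [Set.mem_ofPred_eq, mul_smul]
    exact (smul_le_smul_left x hy).trans hx
  add_mem' {x y} hx hy := by
    rintro _ ⟨a, ha, rfl⟩
    rw [DistribSMul.toLinearMap_apply, add_smul]
    exact A.add_mem (hx (smul_mem_pointwise_smul a x A ha)) (hy (smul_mem_pointwise_smul a y A ha))
  algebraMap_mem' k := by
    rintro _ ⟨a, ha, rfl⟩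
    simpa [Algebra.smul_def] using A.smul_mem k ha
  inv_mem' x hx := by
    rcases eq_or_ne x 0 with rfl | hx0
    · rwa [inv_zero]
    · calc x⁻¹ • A = x⁻¹ • x • A := by rw [smul_eq_self_of_smul_le hx0 hx]
        _ ≤ A := (inv_smul_smul₀ hx0 A).le

theorem le_stabilizer_iff {A S : Submodule K L} [FiniteDimensional K A] :
    S ≤ (stabilizer A).toSubalgebra.toSubmodule ↔ S * A ≤ A := by
  rw [mul_le]
  exact forall₂_congr fun x _ ↦ ⟨fun h a ha ↦ h (smul_mem_pointwise_smul a x A ha),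
    by rintro h _ ⟨a, ha, rfl⟩; exact h a ha⟩

theorem le_intermediateField_mul (H : IntermediateField K L) (A : Submodule K L) :
    A ≤ H.toSubalgebra.toSubmodule * A :=
  le_mul_of_one_le_left' (Submodule.one_le.2 H.one_mem)

theorem stabilizer_mul (A : Submodule K L) [FiniteDimensional K A] :
    (stabilizer A).toSubalgebra.toSubmodule * A = A :=
  (le_stabilizer_iff.1 le_rfl).antisymm (le_intermediateField_mul _ A)

theorem finiteDimensional_stabilizer {A : Submodule K L} [FiniteDimensional K A] (hA : A ≠ ⊥) :
    FiniteDimensional K (stabilizer A) := by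
  obtain ⟨a, ha, ha0⟩ := exists_mem_ne_zero_of_ne_bot hA
  refine finiteDimensional_of_smul_le (W := A) ha0 ?_
  rintro _ ⟨x, hx, rfl⟩
  rw [DistribSMul.toLinearMap_apply, smul_eq_mul, mul_comm]
  exact hx (smul_mem_pointwise_smul a x A ha)

-- The witnesses are Dyson's e-transform `A ⊔ eB`, `B ⊓ e⁻¹A` for some `e ∈ A` with `eB ⊄ A`.
theorem exists_dyson_transform {A B : Submodule K L} [FiniteDimensional K A]
    [FiniteDimensional K B] (h1 : 1 ∈ B) (h : ¬ A * B ≤ A) :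
    ∃ A' B' : Submodule K L, A ≤ A' ∧ B' ≤ B ∧ 1 ∈ B' ∧ A' * B' ≤ A * B ∧
      FiniteDimensional K A' ∧ finrank K B' < finrank K B ∧
      finrank K A' + finrank K B' = finrank K A + finrank K B := by
  obtain ⟨e, heA, heB⟩ : ∃ e ∈ A, ¬ e • B ≤ A := by
    contrapose! h
    exact mul_le.2 fun e he b hb ↦ h e he (smul_mem_pointwise_smul b e B hb)
  have he : e ≠ 0 := by
    rintro rfl
    exact heB (by simp)
  have hfinrank : finrank K ↥(e⁻¹ • (A ⊓ e • B)) = finrank K ↥(A ⊓ e • B) :=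
    finrank_smul (inv_ne_zero he) _
  have hB' : e⁻¹ • (A ⊓ e • B) ≤ B := by
    simpa only [inv_smul_smul₀ he] using smul_le_smul_left e⁻¹ (inf_le_right : A ⊓ e • B ≤ e • B)
  refine ⟨A ⊔ e • B, e⁻¹ • (A ⊓ e • B), le_sup_left, hB', ?_, ?_, inferInstance, ?_, ?_⟩
  · rw [mem_smul_iff_inv_mul_mem (inv_ne_zero he), inv_inv, mul_one]
    exact ⟨heA, 1, h1, mul_one e⟩
  · rw [Submodule.sup_mul]
    refine sup_le (mul_le_mul' le_rfl hB') ?_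
    rw [mul_smul_comm, smul_mul_assoc, inv_smul_smul₀ he, mul_comm A B]
    exact mul_le_mul' le_rfl inf_le_left
  · rw [hfinrank, ← finrank_smul he B]
    exact finrank_lt_finrank_of_lt (inf_lt_right.2 heB)
  · rw [hfinrank, finrank_sup_add_finrank_inf_eq, finrank_smul he]

theorem exists_mul_le_mul_of_one_mem {A B : Submodule K L} [FiniteDimensional K A]
    [FiniteDimensional K B] (hA : A ≠ ⊥) (h1 : 1 ∈ B) :
    ∃ H : IntermediateField K L, FiniteDimensional K H ∧
      H.toSubalgebra.toSubmodule * A ≤ A * B ∧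
      finrank K A + finrank K B ≤ finrank K ↥(A * B) + finrank K H := by
  by_cases h : A * B ≤ A
  · have hAB : A ≤ A * B := le_mul_of_one_le_right' (Submodule.one_le.2 h1)
    have hB : B ≤ (stabilizer A).toSubalgebra.toSubmodule := by
      rwa [le_stabilizer_iff, mul_comm]
    have hfin : FiniteDimensional K (stabilizer A).toSubalgebra.toSubmodule :=
      finiteDimensional_stabilizer hA
    exact ⟨stabilizer A, hfin, (stabilizer_mul A).trans_le hAB,
      add_le_add (finrank_mono hAB) (finrank_mono hB)⟩
  · obtain ⟨A', B', hAA', hBB', h1', hle, _, hlt, hsum⟩ := exists_dyson_transform h1 h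
    have : FiniteDimensional K B' := finiteDimensional_of_le hBB'
    obtain ⟨H, hH, hHA', hdim⟩ := exists_mul_le_mul_of_one_mem (ne_bot_of_le_ne_bot hA hAA') h1'
    exact ⟨H, hH, (mul_le_mul' le_rfl hAA').trans (hHA'.trans hle),
      hsum.ge.trans (hdim.trans (Nat.add_le_add_right (finrank_mono hle) _))⟩
termination_by finrank K B
decreasing_by exact hlt

theorem exists_smul_mul_le_mul_of_mem {A B : Submodule K L} [FiniteDimensional K A]
    [FiniteDimensional K B] (hA : A ≠ ⊥) {b : L} (hb : b ∈ B) (hb0 : b ≠ 0) :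
    ∃ H : IntermediateField K L, FiniteDimensional K H ∧
      b • (H.toSubalgebra.toSubmodule * A) ≤ A * B ∧
      finrank K A + finrank K B ≤ finrank K ↥(A * B) + finrank K H := by
  have h1 : (1 : L) ∈ b⁻¹ • B := by
    rwa [mem_smul_iff_inv_mul_mem (inv_ne_zero hb0), inv_inv, mul_one]
  obtain ⟨H, hH, hle, hdim⟩ := exists_mul_le_mul_of_one_mem hA h1
  rw [mul_smul_comm] at hle hdim
  rw [finrank_smul (inv_ne_zero hb0), finrank_smul (inv_ne_zero hb0)] at hdim
  exact ⟨H, hH, by simpa only [smul_inv_smul₀ hb0] using smul_le_smul_left b hle, hdim⟩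

end Subspaces

section FinitelyManyFields

variable {K L : Type*} [Field K] [Field L] [Algebra K L]

theorem exists_dual_separating {E M : Type*} [Field E] [Algebra K E] [AddCommGroup M] [Module K M]
    [Module E M] [IsScalarTower K E M] (W : Submodule K M) [FiniteDimensional K W] :
    ∃ (n : ℕ) (f : Fin n → Dual E M), ∀ w ∈ W, (∀ i, f i w = 0) → w = 0 := by
  obtain ⟨s, hs⟩ := Module.Finite.iff_fg.1 ‹FiniteDimensional K W›
  have hW : W ≤ (span E (s : Set M)).restrictScalars K := by
    rw [← hs]
    exact span_le_restrictScalars K E _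
  obtain ⟨g, hg⟩ := (finBasis E (span E (s : Set M))).equivFun.toLinearMap.exists_extend
  refine ⟨_, fun i ↦ LinearMap.proj i ∘ₗ g, fun w hw hzero ↦ ?_⟩
  have hgw : g w = (finBasis E (span E (s : Set M))).equivFun ⟨w, hW hw⟩ :=
    LinearMap.congr_fun hg ⟨w, hW hw⟩
  have hw0 : (⟨w, hW hw⟩ : span E (s : Set M)) = 0 :=
    (LinearEquiv.map_eq_zero_iff _).1 (hgw.symm.trans (funext hzero))
  exact congrArg Subtype.val hw0

theorem finiteDimensional_adjoin_submodule (W : Submodule K L) [FiniteDimensional K W]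
    (hW : ∀ x ∈ W, IsIntegral K x) :
    FiniteDimensional K (IntermediateField.adjoin K (W : Set L)) := by
  obtain ⟨s, rfl⟩ := Module.Finite.iff_fg.1 ‹FiniteDimensional K W›
  have hs : FiniteDimensional K (IntermediateField.adjoin K (s : Set L)) :=
    IntermediateField.finiteDimensional_adjoin fun x hx ↦ hW x (subset_span hx)
  have hle : IntermediateField.adjoin K (span K (s : Set L) : Set L) ≤
      IntermediateField.adjoin K (s : Set L) := by
    rw [IntermediateField.adjoin_le_iff]
    exact span_le (p := (IntermediateField.adjoin K (s : Set L)).toSubalgebra.toSubmodule).2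
      (IntermediateField.subset_adjoin K _)
  exact .of_injective (IntermediateField.inclusion hle).toLinearMap
    (IntermediateField.inclusion hle).injective

-- If `f` is a functional over the algebraic closure of `K` in `L` with `f w ≠ 0`, then `w * H ≤ W`
-- forces `x = f (w * x) / f w` for `x ∈ H`, so `H` lies in the field generated by `f(W)`.
theorem exists_finiteDimensional_forall_le (W : Submodule K L) [FiniteDimensional K W] :
    ∃ F : IntermediateField K L, FiniteDimensional K F ∧
      ∀ H : IntermediateField K L, Algebra.IsAlgebraic K H →
        ∀ w : L, w ≠ 0 → w • H.toSubalgebra.toSubmodule ≤ W → H ≤ F := by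
  obtain ⟨n, f, hf⟩ := exists_dual_separating (E := algebraicClosure K L) W
  let coordinate (i : Fin n) : L →ₗ[K] L :=
    (algebraicClosure K L).val.toLinearMap ∘ₗ (f i).restrictScalars K
  let F (i : Fin n) : IntermediateField K L :=
    IntermediateField.adjoin K (W.map (coordinate i) : Set L)
  have hF (i : Fin n) : FiniteDimensional K (F i) := by
    refine finiteDimensional_adjoin_submodule _ ?_
    rintro _ ⟨w, -, rfl⟩
    exact (mem_algebraicClosure_iff.1 (f i w).2).isIntegral
  refine ⟨⨆ i, F i, inferInstance, fun H _ w hw hHW x hx ↦ ?_⟩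
  have hmem {y : L} (hy : y ∈ H) : w * y ∈ W := hHW (smul_mem_pointwise_smul y w _ hy)
  have hxalg : x ∈ algebraicClosure K L := mem_algebraicClosure_iff.2 <|
    (Algebra.IsAlgebraic.isAlgebraic (R := K) (⟨x, hx⟩ : H)).algebraMap (A := L)
  obtain ⟨i, hi⟩ : ∃ i, f i w ≠ 0 := by
    contrapose! hw
    exact hf w (by simpa using hmem H.one_mem) hw
  have hcoord {y : L} (hy : y ∈ H) : (f i (w * y) : L) ∈ F i :=
    IntermediateField.subset_adjoin K _ (mem_map_of_mem (f := coordinate i) (hmem hy))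
  have hsemilinear : f i (w * x) = ⟨x, hxalg⟩ * f i w := by
    rw [← smul_eq_mul (⟨x, hxalg⟩ : algebraicClosure K L), ← map_smul, mul_comm]
    rfl
  have hx_eq : x = f i (w * x) / f i (w * 1) := by
    rw [hsemilinear, mul_one]
    exact (mul_div_cancel_right₀ x (by simpa using hi)).symm
  rw [hx_eq]
  exact le_iSup F i ((F i).div_mem (hcoord hx) (hcoord H.one_mem))

theorem isSeparable_of_finiteDimensional (hsep : ∀ x : L, IsAlgebraic K x → IsSeparable K x)
    (F : IntermediateField K L) [FiniteDimensional K F] : Algebra.IsSeparable K F :=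
  ⟨fun x ↦ .of_algHom F.val (hsep x ((Algebra.IsAlgebraic.isAlgebraic x).algebraMap (A := L)))⟩

theorem finite_Iic_of_isSeparable (F : IntermediateField K L) [FiniteDimensional K F]
    [Algebra.IsSeparable K F] : (Set.Iic F).Finite := by
  have : Finite (IntermediateField K F) :=
    Field.finite_intermediateField_of_exists_primitive_element K F
      (Field.exists_primitive_element K F)
  exact (Set.finite_range IntermediateField.lift).subset fun H hH ↦
    ⟨IntermediateField.restrict hH, IntermediateField.lift_restrict hH⟩

theorem finite_setOf_smul_le (hsep : ∀ x : L, IsAlgebraic K x → IsSeparable K x)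
    (W : Submodule K L) [FiniteDimensional K W] :
    {H : IntermediateField K L | Algebra.IsAlgebraic K H ∧
      ∃ w : L, w ≠ 0 ∧ w • H.toSubalgebra.toSubmodule ≤ W}.Finite := by
  obtain ⟨F, hF, hle⟩ := exists_finiteDimensional_forall_le W
  have := isSeparable_of_finiteDimensional hsep F
  exact (finite_Iic_of_isSeparable F).subset fun H ⟨hH, w, hw, hHW⟩ ↦ hle H hH w hw hHW

end FinitelyManyFields

section Kneser

theorem exists_le_of_forall_mem_exists_mem {k V ι : Type*} [DivisionRing k] [Infinite k]
    [AddCommGroup V] [Module k V] {s : Set ι} (hs : s.Finite) {p : ι → Submodule k V}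
    {B : Submodule k V} (h : ∀ b ∈ B, ∃ i ∈ s, b ∈ p i) : ∃ i ∈ s, B ≤ p i := by
  have := hs.to_subtype
  obtain ⟨⟨i, hi⟩, htop⟩ := Subspace.exists_eq_top_of_iUnion_eq_univ
    (p := fun i : s ↦ (p i).comap B.subtype) <| Set.eq_univ_of_forall fun b ↦ by
      obtain ⟨i, hi, hbi⟩ := h b b.2
      exact Set.mem_iUnion.2 ⟨⟨i, hi⟩, hbi⟩
  exact ⟨i, hi, comap_subtype_eq_top.1 htop⟩

variable {K L : Type*} [Field K] [Field L] [Algebra K L]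

-- The `b` with `b * (H * A) ≤ A * B` form the subspace `(A * B) / (H * A)`; these cover `B`.
theorem exists_mul_le_and_finrank_add_le [Infinite K]
    (hsep : ∀ x : L, IsAlgebraic K x → IsSeparable K x) {A B : Submodule K L}
    [FiniteDimensional K A] [FiniteDimensional K B] (hA : A ≠ ⊥) (hB : B ≠ ⊥) :
    ∃ H : IntermediateField K L, H.toSubalgebra.toSubmodule * (A * B) ≤ A * B ∧
      finrank K A + finrank K B ≤ finrank K ↥(A * B) + finrank K H := by
  let candidates : Set (IntermediateField K L) :=
    {H | (Algebra.IsAlgebraic K H ∧ ∃ w : L, w ≠ 0 ∧ w • H.toSubalgebra.toSubmodule ≤ A * B) ∧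
      finrank K A + finrank K B ≤ finrank K ↥(A * B) + finrank K H}
  have hfinite : candidates.Finite :=
    (finite_setOf_smul_le hsep (A * B)).subset fun H hH ↦ hH.1
  obtain ⟨a, ha, ha0⟩ := exists_mem_ne_zero_of_ne_bot hA
  have hne_zero {b : L} (hb : b ∈ B) (hb0 : b ≠ 0) :
      ∃ H ∈ candidates, b ∈ (A * B) / (H.toSubalgebra.toSubmodule * A) := by
    obtain ⟨H, hH, hle, hdim⟩ := exists_smul_mul_le_mul_of_mem hA hb hb0
    refine ⟨H, ⟨⟨inferInstance, b * a, mul_ne_zero hb0 ha0, ?_⟩, hdim⟩,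
      mem_div_iff_smul_subset.2 hle⟩
    rintro _ ⟨x, hx, rfl⟩
    have hxa := hle (smul_mem_pointwise_smul _ b _ (Submodule.mul_mem_mul hx ha))
    simpa [mul_assoc, mul_comm a] using hxa
  have hcover : ∀ b ∈ B, ∃ H ∈ candidates, b ∈ (A * B) / (H.toSubalgebra.toSubmodule * A) := by
    intro b hb
    rcases eq_or_ne b 0 with rfl | hb0
    · obtain ⟨c, hc, hc0⟩ := exists_mem_ne_zero_of_ne_bot hB
      obtain ⟨H, hH, -⟩ := hne_zero hc hc0
      exact ⟨H, hH, zero_mem _⟩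
    · exact hne_zero hb hb0
  obtain ⟨H, hH, hle⟩ := exists_le_of_forall_mem_exists_mem hfinite hcover
  rw [Submodule.le_div_iff_mul_le, mul_comm, mul_assoc] at hle
  exact ⟨H, hle, hH.2⟩

theorem finrank_stabilizer_mul_add_le [Infinite K]
    (hsep : ∀ x : L, IsAlgebraic K x → IsSeparable K x) {A B : Submodule K L}
    [FiniteDimensional K A] [FiniteDimensional K B] (hA : A ≠ ⊥) (hB : B ≠ ⊥) :
    finrank K ↥((stabilizer (A * B)).toSubalgebra.toSubmodule * A) +
        finrank K ↥((stabilizer (A * B)).toSubalgebra.toSubmodule * B) ≤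
      finrank K ↥(A * B) + finrank K (stabilizer (A * B)) := by
  have hAB : A * B ≠ ⊥ := mul_ne_zero hA hB
  have hfin : FiniteDimensional K (stabilizer (A * B)).toSubalgebra.toSubmodule :=
    finiteDimensional_stabilizer hAB
  set S := (stabilizer (A * B)).toSubalgebra.toSubmodule with hS
  have hmul : S * A * (S * B) = A * B := by
    rw [mul_mul_mul_comm, mul_assoc, stabilizer_mul, stabilizer_mul]
  obtain ⟨H, hle, hdim⟩ := exists_mul_le_and_finrank_add_le hsep
    (ne_bot_of_le_ne_bot hA (le_intermediateField_mul (stabilizer (A * B)) A))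
    (ne_bot_of_le_ne_bot hB (le_intermediateField_mul (stabilizer (A * B)) B))
  rw [← hS, hmul] at hle hdim
  exact hdim.trans (Nat.add_le_add_left (finrank_mono (le_stabilizer_iff.2 hle)) _)

end Kneser

section Minimum

variable {K L : Type*} [Field K] [Field L] [Algebra K L]

theorem finrank_restrictScalars {E V : Type*} [Field E] [Algebra K E] [AddCommGroup V] [Module K V]
    [Module E V] [IsScalarTower K E V] (M : Submodule E V) :
    finrank K (M.restrictScalars K) = finrank K E * finrank E M :=
  (finrank_mul_finrank K E M).symm

theorem finiteDimensional_restrictScalars {E V : Type*} [Field E] [Algebra K E]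
    [FiniteDimensional K E] [AddCommGroup V] [Module K V] [Module E V] [IsScalarTower K E V]
    (M : Submodule E V) [FiniteDimensional E M] : FiniteDimensional K (M.restrictScalars K) :=
  Module.Finite.trans (R := K) E M

theorem finrank_dvd_of_mul_le {H : IntermediateField K L} {M : Submodule K L}
    (h : H.toSubalgebra.toSubmodule * M ≤ M) : finrank K H ∣ finrank K M := by
  let N : Submodule H L :=
    { M with smul_mem' := fun x m hm ↦ h (Submodule.mul_mem_mul x.2 hm) }
  exact ⟨finrank H N, finrank_restrictScalars N⟩

theorem ceilDiv_mul_le_of_dvd {d m n : ℕ} (hd : 0 < d) (hdn : d ∣ n) (hmn : m ≤ n) :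
    (m ⌈/⌉ d) * d ≤ n := by
  obtain ⟨k, rfl⟩ := hdn
  rw [mul_comm]
  exact Nat.mul_le_mul_left d ((ceilDiv_le_iff_le_mul hd).2 hmn)

theorem ceilDiv_finrank_mul_le (H : IntermediateField K L) [FiniteDimensional K H]
    (A : Submodule K L) [FiniteDimensional K A] :
    (finrank K A ⌈/⌉ finrank K H) * finrank K H ≤
      finrank K ↥(H.toSubalgebra.toSubmodule * A) := by
  have : FiniteDimensional K H.toSubalgebra.toSubmodule := ‹FiniteDimensional K H›
  refine ceilDiv_mul_le_of_dvd finrank_pos (finrank_dvd_of_mul_le ?_)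
    (finrank_mono (le_intermediateField_mul H A))
  rw [← mul_assoc, (Subalgebra.isIdempotentElem_toSubmodule _).eq]

theorem exists_ceilDiv_mul_le_finrank_mul [Infinite K]
    (hsep : ∀ x : L, IsAlgebraic K x → IsSeparable K x) {A B : Submodule K L}
    (hA : 0 < finrank K A) (hB : 0 < finrank K B) :
    ∃ H : IntermediateField K L, FiniteDimensional K H ∧
      (finrank K A ⌈/⌉ finrank K H + finrank K B ⌈/⌉ finrank K H - 1) * finrank K H ≤
        finrank K ↥(A * B) := by
  have := FiniteDimensional.of_finrank_pos hA
  have := FiniteDimensional.of_finrank_pos hB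
  have hA0 : A ≠ ⊥ := one_le_finrank_iff.1 hA
  have hB0 : B ≠ ⊥ := one_le_finrank_iff.1 hB
  have hfin := finiteDimensional_stabilizer (A := A * B) (mul_ne_zero hA0 hB0)
  refine ⟨stabilizer (A * B), hfin, ?_⟩
  rw [Nat.sub_mul, one_mul, Nat.sub_le_iff_le_add, add_mul]
  exact (add_le_add (ceilDiv_finrank_mul_le _ A) (ceilDiv_finrank_mul_le _ B)).trans
    (finrank_stabilizer_mul_add_le hsep hA0 hB0)

theorem exists_le_finrank_eq {k V : Type*} [DivisionRing k] [AddCommGroup V] [Module k V]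
    (M : Submodule k V) {r : ℕ} (hr : r ≤ finrank k M) : ∃ A ≤ M, finrank k A = r := by
  obtain ⟨f, hf⟩ := exists_linearIndependent_of_le_finrank hr
  refine ⟨span k (Set.range (M.subtype ∘ f)), span_le.2 ?_, ?_⟩
  · rintro _ ⟨i, rfl⟩
    exact (f i).2
  · simpa using finrank_span_eq_card (hf.map' M.subtype M.ker_subtype)

theorem natCast_ceilDiv_le_of_le_mul {r d : ℕ} {c : Cardinal} (hd : 0 < d)
    (h : (r : Cardinal) ≤ d * c) : ((r ⌈/⌉ d : ℕ) : Cardinal) ≤ c := by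
  rcases lt_or_ge c Cardinal.aleph0 with hc | hc
  · obtain ⟨n, rfl⟩ := Cardinal.lt_aleph0.1 hc
    exact_mod_cast (ceilDiv_le_iff_le_mul hd).2 (by exact_mod_cast h)
  · exact Cardinal.natCast_le_aleph0.trans hc

theorem exists_linearIndependent_pow (hsep : ∀ x : L, IsAlgebraic K x → IsSeparable K x) {m : ℕ}
    (hm : (m : Cardinal) ≤ Module.rank K L) :
    ∃ x : L, LinearIndependent K fun i : Fin m ↦ x ^ (i : ℕ) := by
  by_cases htrans : ∃ x : L, Transcendental K x
  · obtain ⟨x, hx⟩ := htrans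
    have hmonomials := (Polynomial.basisMonomials K).linearIndependent.map'
      (Polynomial.aeval x).toLinearMap (LinearMap.ker_eq_bot.2 (transcendental_iff_injective.1 hx))
    refine ⟨x, ?_⟩
    simpa [Function.comp_def] using hmonomials.comp (Fin.val : Fin m → ℕ) Fin.val_injective
  · have halg (x : L) : IsAlgebraic K x := not_not.1 fun hx ↦ htrans ⟨x, hx⟩
    obtain ⟨s, rfl, hli⟩ := exists_finset_linearIndependent_of_le_rank hm
    let E := IntermediateField.adjoin K (s : Set L)
    have hE : FiniteDimensional K E :=
      IntermediateField.finiteDimensional_adjoin fun x _ ↦ (halg x).isIntegral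
    have hcard : s.card ≤ finrank K E := by
      rw [← finrank_span_finset_eq_card hli]
      have : FiniteDimensional K E.toSubalgebra.toSubmodule := hE
      exact finrank_mono (t := E.toSubalgebra.toSubmodule)
        (span_le.2 (IntermediateField.subset_adjoin K _))
    have := isSeparable_of_finiteDimensional hsep E
    obtain ⟨α, hα⟩ := Field.exists_primitive_element K E
    have hdegree : (minpoly K α).natDegree = finrank K E :=
      (Field.primitive_element_iff_minpoly_natDegree_eq K α).1 hα
    have hpow := (_root_.linearIndependent_pow (K := K) α).map' E.val.toLinearMap
      (LinearMap.ker_eq_bot.2 E.val.injective)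
    exact ⟨α, hpow.comp (Fin.castLE (hcard.trans hdegree.ge)) (Fin.castLE_injective _)⟩

theorem exists_finrank_mul_le_add_sub_one (hsep : ∀ x : L, IsAlgebraic K x → IsSeparable K x)
    {a b : ℕ} (ha : (a : Cardinal) ≤ Module.rank K L) (hb : (b : Cardinal) ≤ Module.rank K L) :
    ∃ P Q : Submodule K L, finrank K P = a ∧ finrank K Q = b ∧
      finrank K ↥(P * Q) ≤ a + b - 1 := by
  obtain ⟨x, hx⟩ := exists_linearIndependent_pow (m := max a b) hsep
    (by rcases max_choice a b with h | h <;> rwa [h])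
  let powers (n : ℕ) : Submodule K L := span K (Set.range fun i : Fin n ↦ x ^ (i : ℕ))
  have hfinrank {n : ℕ} (hn : n ≤ max a b) : finrank K (powers n) = n :=
    (finrank_span_eq_card (hx.comp (Fin.castLE hn) (Fin.castLE_injective hn))).trans
      (Fintype.card_fin n)
  have hmul : powers a * powers b ≤ powers (a + b - 1) := by
    rw [span_mul_span, span_le]
    rintro _ ⟨_, ⟨i, rfl⟩, _, ⟨j, rfl⟩, rfl⟩
    exact subset_span ⟨⟨i + j, by omega⟩, pow_add x i j⟩
  have hfin : FiniteDimensional K (powers (a + b - 1)) :=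
    FiniteDimensional.span_of_finite K (Set.finite_range _)
  refine ⟨powers a, powers b, hfinrank (le_max_left a b), hfinrank (le_max_right a b),
    (finrank_mono hmul).trans ?_⟩
  exact (finrank_range_le_card _).trans_eq (Fintype.card_fin _)

theorem isSeparable_of_isAlgebraic_intermediateField
    (hsep : ∀ x : L, IsAlgebraic K x → IsSeparable K x) (H : IntermediateField K L)
    [Algebra.IsAlgebraic K H] (x : L) (hx : IsAlgebraic H x) : IsSeparable H x :=
  (hsep x (hx.restrictScalars K)).tower_top H

theorem ceilDiv_pos {d r : ℕ} (hd : 0 < d) (hr : 0 < r) : 0 < r ⌈/⌉ d :=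
  Nat.pos_of_ne_zero fun h ↦ hr.not_ge (by simpa [h] using le_smul_ceilDiv (b := r) hd)

theorem exists_finrank_mul_le_finrank_mul {H : IntermediateField K L} [FiniteDimensional K H]
    (P Q : Submodule H L) [FiniteDimensional H P] [FiniteDimensional H Q] {r s : ℕ}
    (hr : r ≤ finrank K H * finrank H P) (hs : s ≤ finrank K H * finrank H Q) :
    ∃ A B : Submodule K L, finrank K A = r ∧ finrank K B = s ∧
      finrank K ↥(A * B) ≤ finrank K H * finrank H ↥(P * Q) := by
  rw [← finrank_restrictScalars] at hr hs ⊢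
  obtain ⟨A, hAP, hA⟩ := exists_le_finrank_eq _ hr
  obtain ⟨B, hBQ, hB⟩ := exists_le_finrank_eq _ hs
  have := finiteDimensional_restrictScalars (K := K) (P * Q)
  have hAB : A * B ≤ (P * Q).restrictScalars K := by
    rw [Submodule.restrictScalars_mul]
    exact mul_le_mul' hAP hBQ
  exact ⟨A, B, hA, hB, finrank_mono hAB⟩

theorem exists_finrank_mul_le (hsep : ∀ x : L, IsAlgebraic K x → IsSeparable K x) {r s : ℕ}
    (hr : 0 < r) (hs : 0 < s) (hrL : (r : Cardinal) ≤ Module.rank K L)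
    (hsL : (s : Cardinal) ≤ Module.rank K L) (H : IntermediateField K L) [FiniteDimensional K H] :
    ∃ A B : Submodule K L, finrank K A = r ∧ finrank K B = s ∧
      finrank K ↥(A * B) ≤
        (r ⌈/⌉ finrank K H + s ⌈/⌉ finrank K H - 1) * finrank K H := by
  have hH : 0 < finrank K H := finrank_pos
  have hrank {n : ℕ} (hn : (n : Cardinal) ≤ Module.rank K L) :
      ((n ⌈/⌉ finrank K H : ℕ) : Cardinal) ≤ Module.rank H L :=
    natCast_ceilDiv_le_of_le_mul hH (by rwa [finrank_eq_rank, rank_mul_rank])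
  obtain ⟨P, Q, hP, hQ, hPQ⟩ := exists_finrank_mul_le_add_sub_one
    (isSeparable_of_isAlgebraic_intermediateField hsep H) (hrank hrL) (hrank hsL)
  have := FiniteDimensional.of_finrank_pos (hP ▸ ceilDiv_pos hH hr)
  have := FiniteDimensional.of_finrank_pos (hQ ▸ ceilDiv_pos hH hs)
  obtain ⟨A, B, hA, hB, hAB⟩ := exists_finrank_mul_le_finrank_mul P Q
    (hP ▸ le_smul_ceilDiv hH : r ≤ _) (hQ ▸ le_smul_ceilDiv hH : s ≤ _)
  refine ⟨A, B, hA, hB, hAB.trans ?_⟩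
  rw [mul_comm]
  exact Nat.mul_le_mul_right _ hPQ

end Minimum

end LinearKneser

theorem stmt_18_general (K L : Type*) [Field K] [Field L] [Algebra K L] [Infinite K]
    (hsep : ∀ x : L, IsAlgebraic K x → IsSeparable K x)
    (r s : ℕ) (hr : 0 < r) (hs : 0 < s)
    (hrL : (r : Cardinal) ≤ Module.rank K L) (hsL : (s : Cardinal) ≤ Module.rank K L) :
    sInf {n : ℕ | ∃ A B : Submodule K L,
        Module.finrank K A = r ∧ Module.finrank K B = s ∧ Module.finrank K ↥(A * B) = n}
      = sInf {n : ℕ | ∃ H : IntermediateField K L, FiniteDimensional K H ∧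
          n = (r ⌈/⌉ Module.finrank K ↥H + s ⌈/⌉ Module.finrank K ↥H - 1)
                * Module.finrank K ↥H} := by
  refine csInf_eq_csInf_of_forall_exists_le ?_ ?_
  · rintro _ ⟨A, B, rfl, rfl, rfl⟩
    obtain ⟨H, hH, hle⟩ := LinearKneser.exists_ceilDiv_mul_le_finrank_mul hsep hr hs
    exact ⟨_, ⟨H, hH, rfl⟩, hle⟩
  · rintro _ ⟨H, hH, rfl⟩
    obtain ⟨A, B, hA, hB, hle⟩ := LinearKneser.exists_finrank_mul_le hsep hr hs hrL hsL H
    exact ⟨_, ⟨A, B, hA, hB, rfl⟩, hle⟩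

/-- Theorem 1.1 in characteristic 0: for a field extension `K ⊆ L` with `char K = 0`
and positive integers `r, s ≤ dim_K L`, the minimum of `dim_K ⟨AB⟩` over `K`-subspaces
`A, B` of `L` with `dim_K A = r`, `dim_K B = s` equals
`κ_{K,L}(r,s) = min_h (⌈r/h⌉ + ⌈s/h⌉ - 1)·h`, where `h` ranges over the `K`-degrees of
finite-dimensional intermediate fields `K ⊆ H ⊆ L`. -/
theorem stmt_18 (K L : Type*) [Field K] [Field L] [Algebra K L]
    [CharZero K]
    (r s : ℕ) (hr : 0 < r) (hs : 0 < s)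
    (hrL : (r : Cardinal) ≤ Module.rank K L) (hsL : (s : Cardinal) ≤ Module.rank K L) :
    sInf {n : ℕ | ∃ A B : Submodule K L,
        Module.finrank K A = r ∧ Module.finrank K B = s ∧ Module.finrank K ↥(A * B) = n}
      = sInf {n : ℕ | ∃ H : IntermediateField K L, FiniteDimensional K H ∧
          n = (r ⌈/⌉ Module.finrank K ↥H + s ⌈/⌉ Module.finrank K ↥H - 1)
                * Module.finrank K ↥H} := by
  have := Infinite.of_injective _ (Nat.cast_injective (R := K))
  exact stmt_18_general K L (fun _ hx ↦ (minpoly.irreducible hx.isIntegral).separable)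
    r s hr hs hrL hsL
end
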